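/- Let N > 0 and let m ≥ 1 be an integer. For every integer j ≥ 2m there exist a real number σ_{*,j} > 0 and an exponentially decaying sequence (c_p)_{p≥1} with c_1 = α_1 solving the MG eigenvalue recursion with constant shifts σ_p = σ_{*,j} (with frequencies k1 = j², k2 = j), such that σ_{*,j} ≥ j · m N²/(24 N⁴ m² + 2). In particular σ_{*,j} → ∞ as j → ∞, so the linearization of the non-diffusive MG equation around Θ_0 = sin(m x_3) possesses unstable eigenvalues of arbitrarily large magnitude. -/

import Mathlib

/-- The coefficients `α_p = 2(N⁴(mp)²(k1² + k2² + (mp)²) + k2⁴) / (m N² k2² (k1² + k2²))`. -/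
noncomputable def alphaMG (N : ℝ) (m : ℕ) (k1 k2 : ℤ) (p : ℕ) : ℝ :=
  2 * (N ^ 4 * ((m : ℝ) * (p : ℝ)) ^ 2
        * ((k1 : ℝ) ^ 2 + (k2 : ℝ) ^ 2 + ((m : ℝ) * (p : ℝ)) ^ 2) + (k2 : ℝ) ^ 4)
    / ((m : ℝ) * N ^ 2 * (k2 : ℝ) ^ 2 * ((k1 : ℝ) ^ 2 + (k2 : ℝ) ^ 2))

/-- A sequence `(c_p)_{p ≥ 1}` solves the MG eigenvalue recursion with shifts `(σ_p)` and
coefficients `(α_p)` if `σ_1 c_1 + c_2/α_2 = 0` and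
`σ_p c_p + c_{p+1}/α_{p+1} + c_{p−1}/α_{p−1} = 0` for all `p ≥ 2`. -/
def SolvesMGRecursion (α σ c : ℕ → ℝ) : Prop :=
  σ 1 * c 1 + c 2 / α 2 = 0 ∧
  ∀ p : ℕ, 2 ≤ p → σ p * c p + c (p + 1) / α (p + 1) + c (p - 1) / α (p - 1) = 0

/-- A sequence `(c_p)_{p ≥ 1}` decays exponentially in `p` if there are `C > 0` and
`λ ∈ (0,1)` with `|c_p| ≤ C λ^p` for all `p ≥ 1`. -/
def DecaysExponentially (c : ℕ → ℝ) : Prop :=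
  ∃ C : ℝ, 0 < C ∧ ∃ lam : ℝ, lam ∈ Set.Ioo (0 : ℝ) 1 ∧ ∀ p : ℕ, 1 ≤ p → |c p| ≤ C * lam ^ p


open Filter Topology

/-- Shooting sequence for the recursion, in alternating-sign-free form. -/
noncomputable def shootMG (α : ℕ → ℝ) (s : ℝ) : ℕ → ℝ
  | 0 => 0
  | 1 => 1
  | (n + 2) => s * α (n + 1) * shootMG α s (n + 1) - shootMG α s n

theorem shootMG_succ (α : ℕ → ℝ) (s : ℝ) (n : ℕ) :
    shootMG α s (n + 2) = s * α (n + 1) * shootMG α s (n + 1) - shootMG α s n := by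
  rw [shootMG]

theorem shootMG_cont (α : ℕ → ℝ) (n : ℕ) : Continuous (fun s => shootMG α s n) := by
  induction n using Nat.twoStepInduction with
  | zero => simp only [shootMG]; fun_prop
  | one => simp only [shootMG]; fun_prop
  | more n h1 h2 => simp only [shootMG_succ]; fun_prop

/-- Once increasing in the region where `s α ≥ 2`, the sequence stays increasing. -/
theorem shootMG_grow (α : ℕ → ℝ) (s : ℝ) (p : ℕ)
    (hα : ∀ q, p ≤ q → 2 ≤ s * α q) (h0 : 0 < shootMG α s (p + 1))
    (h1 : shootMG α s p < shootMG α s (p + 1)) (n : ℕ) :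
    0 < shootMG α s (p + n + 1) ∧ shootMG α s (p + n) < shootMG α s (p + n + 1) := by
  induction n with
  | zero => exact ⟨h0, h1⟩
  | succ n ih =>
    obtain ⟨a, b⟩ := ih
    have h := shootMG_succ α s (p + n)
    have h2 := mul_le_mul_of_nonneg_right (hα (p + n + 1) (by omega)) a.le
    have e : p + (n + 1) + 1 = p + n + 2 := by ring
    have e' : p + (n + 1) = p + n + 1 := by ring
    rw [e, e', h]
    constructor <;> linarith

theorem shootMG_exists (α : ℕ → ℝ) (hpos : ∀ p, 1 ≤ p → 0 < α p) (h12 : α 1 ≤ α 2)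
    (κ : ℝ) (hκ : 0 < κ) (hα : ∀ p : ℕ, 1 ≤ p → κ * p ≤ α p) :
    ∃ s : ℝ, 1 / α 2 ≤ s ∧ (∀ p, 1 ≤ p → 0 < shootMG α s p) ∧
      ∃ P : ℕ, ∀ p, P ≤ p → 3 ≤ s * α p ∧ shootMG α s (p + 1) ≤ shootMG α s p := by
  set S : Set ℝ := {s | ∀ p, 1 ≤ p → 0 < shootMG α s p} ∩ Set.Ioi 0 with hS
  have hα2 := hpos 2 (by norm_num)
  have hα1 := hpos 1 (by norm_num)
  have hne : S.Nonempty := by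
    refine ⟨2 / κ, ?_, by simp only [Set.mem_Ioi]; positivity⟩
    have key := shootMG_grow α (2 / κ) 1 (fun q hq => by
      have h1 := hα q hq
      have hq' : (1 : ℝ) ≤ q := by exact_mod_cast hq
      have : κ ≤ α q := by nlinarith
      rw [div_mul_eq_mul_div, le_div_iff₀ hκ]; linarith)
    have hk : κ ≤ α 1 := by simpa using hα 1 le_rfl
    have h2 : shootMG α (2 / κ) 2 = 2 / κ * α 1 := by simp [shootMG]
    have h3 : 2 ≤ 2 / κ * α 1 := by
      rw [div_mul_eq_mul_div, le_div_iff₀ hκ]; linarith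
    have key2 := key (by rw [h2]; linarith) (by rw [h2]; simp only [shootMG]; linarith)
    intro p hp
    obtain rfl | hp := hp.eq_or_lt
    · simp [shootMG]
    · obtain ⟨n, rfl⟩ : ∃ n, p = 1 + n + 1 := ⟨p - 2, by omega⟩
      exact (key2 n).1
  have hlow : ∀ s ∈ S, 1 / α 2 ≤ s := by
    rintro s ⟨hs, hs0⟩
    have hs0' : 0 < s := hs0
    have h := hs 3 (by norm_num)
    have h3 : shootMG α s 3 = s * α 2 * (s * α 1) - 1 := by simp [shootMG]
    rw [h3] at h
    rw [div_le_iff₀ hα2]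
    by_contra hc
    push Not at hc
    have h1 : s * α 1 ≤ s * α 2 := mul_le_mul_of_nonneg_left h12 hs0'.le
    have h4 : 0 < s * α 1 := by positivity
    nlinarith
  have hbdd : BddBelow S := ⟨_, hlow⟩
  set t := sInf S with ht
  have htlow : 1 / α 2 ≤ t := le_csInf hne hlow
  have ht0 : 0 < t := lt_of_lt_of_le (by positivity) htlow
  have hcl : t ∈ closure S := csInf_mem_closure hne hbdd
  have hnn : ∀ p, 0 ≤ shootMG α t p := by
    intro p
    have hc : IsClosed {s | 0 ≤ shootMG α s p} := isClosed_le continuous_const (shootMG_cont α p)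
    have hsub : S ⊆ {s | 0 ≤ shootMG α s p} := by
      rintro s ⟨hs, -⟩
      rcases Nat.eq_zero_or_pos p with rfl | hp
      · simp [shootMG]
      · exact (hs p hp).le
    exact closure_minimal hsub hc hcl
  have hpp : ∀ p, 0 < shootMG α t (p + 1) := by
    intro p
    induction p with
    | zero => simp [shootMG]
    | succ n ih =>
      refine lt_of_le_of_ne (hnn _) fun h => ?_
      have h1 := shootMG_succ α t (n + 1)
      have h2 := hnn (n + 1 + 2)
      rw [h1, ← h] at h2
      linarith
  obtain ⟨P, hP⟩ := exists_nat_gt (6 / (t * κ))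
  have hP0 : 1 ≤ P := by
    have : (0 : ℝ) < P := lt_trans (by positivity) hP
    exact_mod_cast this
  have hbig : ∀ p, P ≤ p → 6 ≤ t * α p := by
    intro p hp
    have h1 := hα p (by omega)
    have h2 : (P : ℝ) ≤ p := by exact_mod_cast hp
    rw [div_lt_iff₀ (by positivity)] at hP
    have h3 : t * (κ * p) ≤ t * α p := mul_le_mul_of_nonneg_left h1 ht0.le
    have h4 : (P : ℝ) * (t * κ) ≤ p * (t * κ) := mul_le_mul_of_nonneg_right h2 (by positivity)
    linarith
  refine ⟨t, htlow, fun p hp => ?_, P, fun p hp => ⟨by linarith [hbig p hp], ?_⟩⟩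
  · obtain ⟨n, rfl⟩ : ∃ n, p = n + 1 := ⟨p - 1, by omega⟩
    exact hpp n
  by_contra hc
  push Not at hc
  have e1 : ∀ᶠ s in 𝓝 t, t / 2 < s := lt_mem_nhds (by linarith)
  have e2 : ∀ᶠ s in 𝓝 t, shootMG α s p < shootMG α s (p + 1) :=
    (shootMG_cont α p).continuousAt.eventually_lt (shootMG_cont α (p + 1)).continuousAt hc
  have e3 : ∀ᶠ s in 𝓝 t, ∀ q ∈ Finset.range (p + 1), 0 < shootMG α s (q + 1) := by
    rw [Filter.eventually_all_finset]
    intro q _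
    exact continuousAt_const.eventually_lt (shootMG_cont α (q + 1)).continuousAt (hpp q)
  have e4 : ∀ᶠ s in 𝓝[<] t, s < t := eventually_mem_nhdsWithin
  obtain ⟨s, ⟨⟨h1, h2⟩, h3⟩, h4⟩ :=
    ((((e1.and e2).and e3).filter_mono nhdsWithin_le_nhds).and e4).exists
  have hs0 : 0 < s := by linarith
  have hmem : s ∈ S := by
    refine ⟨fun q hq => ?_, hs0⟩
    by_cases hqp : q ≤ p + 1
    · have := h3 (q - 1) (by simp; omega)
      rwa [Nat.sub_add_cancel hq] at this
    · obtain ⟨n, rfl⟩ : ∃ n, q = p + n + 1 := ⟨q - p - 1, by omega⟩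
      refine (shootMG_grow α s p (fun q hq => ?_) (h3 p (by simp)) h2 n).1
      have h5 := hbig q (by omega)
      have h6 := hpos q (by omega)
      have h7 : t / 2 * α q ≤ s * α q := mul_le_mul_of_nonneg_right h1.le h6.le
      linarith
  exact absurd (csInf_le hbdd hmem) (not_le.mpr h4)

theorem mg_abstract (α : ℕ → ℝ) (hpos : ∀ p, 1 ≤ p → 0 < α p) (h12 : α 1 ≤ α 2)
    (κ : ℝ) (hκ : 0 < κ) (hα : ∀ p : ℕ, 1 ≤ p → κ * p ≤ α p) :
    ∃ s : ℝ, 1 / α 2 ≤ s ∧ ∃ c : ℕ → ℝ, c 1 = α 1 ∧ DecaysExponentially c ∧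
      SolvesMGRecursion α (fun _ => s) c := by
  obtain ⟨s, hs, hd, P, hP⟩ := shootMG_exists α hpos h12 κ hκ hα
  have hα2 := hpos 2 (by norm_num)
  have hs0 : 0 < s := lt_of_lt_of_le (by positivity) hs
  set d := shootMG α s with hdef
  have hd0 : ∀ p, 0 ≤ d p := by
    intro p
    rcases Nat.eq_zero_or_pos p with rfl | hp
    · simp [hdef, shootMG]
    · exact (hd p hp).le
  have hrec : ∀ n, d (n + 2) = s * α (n + 1) * d (n + 1) - d n := shootMG_succ α s
  refine ⟨s, hs, fun p => (-1) ^ (p + 1) * (α p * d p), by simp [hdef, shootMG], ?_, ?_, ?_⟩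
  · set D := ∑ i ∈ Finset.range (P + 1), 2 ^ i * d i with hD
    have hD0 : 0 ≤ D := Finset.sum_nonneg fun i _ => mul_nonneg (by positivity) (hd0 i)
    have hb : ∀ p, d p ≤ D * (1 / 2) ^ p := by
      intro p
      induction p with
      | zero => simp [hdef, shootMG, hD0]
      | succ n ih =>
        by_cases hn : n + 1 ≤ P
        · have h1 : 2 ^ (n + 1) * d (n + 1) ≤ D :=
            Finset.single_le_sum (f := fun i => 2 ^ i * d i)
              (fun i _ => mul_nonneg (by positivity) (hd0 i))
              (Finset.mem_range.mpr (by omega))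
          rw [one_div, inv_pow, ← div_eq_mul_inv, le_div_iff₀ (by positivity)]
          linarith
        · obtain ⟨h1, h2⟩ := hP (n + 1) (by omega)
          have h3 := hrec n
          have h4 := mul_le_mul_of_nonneg_right h1 (hd0 (n + 1))
          rw [pow_succ]
          linarith
    refine ⟨5 / 2 * D / s + 1, by positivity, 1 / 2, by norm_num, fun p hp => ?_⟩
    obtain ⟨n, rfl⟩ : ∃ n, p = n + 1 := ⟨p - 1, by omega⟩
    have hnn : 0 ≤ α (n + 1) * d (n + 1) := mul_nonneg (hpos _ hp).le (hd0 _)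
    rw [abs_mul, abs_pow, abs_neg, abs_one, one_pow, one_mul, abs_of_nonneg hnn]
    have h1 := hb n
    have h2 := hb (n + 2)
    have h3 := hrec n
    have h4 : α (n + 1) * d (n + 1) ≤ 5 / 2 * D / s * (1 / 2) ^ (n + 1) := by
      rw [div_mul_eq_mul_div, le_div_iff₀ hs0]
      rw [pow_succ] at h2 ⊢
      rw [pow_succ] at h2
      linarith
    have h5 : (0 : ℝ) < (1 / 2) ^ (n + 1) := by positivity
    linarith
  · have h := hrec 0
    have h0 : d 0 = 0 := by simp [hdef, shootMG]
    simp only [zero_add, h0, sub_zero] at h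
    field_simp
    norm_num
    rw [h]; ring
  · intro p hp
    obtain ⟨n, rfl⟩ : ∃ n, p = n + 2 := ⟨p - 2, by omega⟩
    have h := hrec (n + 1)
    have a1 := (hpos (n + 1) (by omega)).ne'
    have a3 := (hpos (n + 3) (by omega)).ne'
    simp only [show n + 2 - 1 = n + 1 from rfl, show n + 2 + 1 = n + 3 from rfl]
    simp only [show n + 1 + 2 = n + 3 from rfl, show n + 1 + 1 = n + 2 from rfl] at h
    have q : ∀ e x y : ℝ, x ≠ 0 → e * (x * y) / x = e * y := fun e x y hx => by field_simp
    rw [q _ _ _ a3, q _ _ _ a1, h]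
    ring

/-- **Arbitrarily large unstable eigenvalues for the non-diffusive linearized MG
equation:** for `N > 0`, an integer `m ≥ 1` and every integer `j ≥ 2m`, with frequencies
`k1 = j²`, `k2 = j` there exist `σ_{*,j} > 0` and an exponentially decaying sequence
`(c_p)` with `c_1 = α_1` solving the MG eigenvalue recursion with constant shifts
`σ_p = σ_{*,j}`, such that `σ_{*,j} ≥ j·mN²/(24N⁴m² + 2)`; in particular `σ_{*,j} → ∞`
as `j → ∞`. -/
theorem mg_nondiffusive_eigenvalues_unbounded (N : ℝ) (hN : 0 < N)
    (m : ℕ) (hm : 1 ≤ m) (j : ℕ) (hj : 2 * m ≤ j) :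
    ∃ σstar : ℝ, 0 < σstar ∧
      (j : ℝ) * (m : ℝ) * N ^ 2 / (24 * N ^ 4 * (m : ℝ) ^ 2 + 2) ≤ σstar ∧
      ∃ c : ℕ → ℝ, c 1 = alphaMG N m ((j : ℤ) ^ 2) (j : ℤ) 1 ∧ DecaysExponentially c ∧
        SolvesMGRecursion (alphaMG N m ((j : ℤ) ^ 2) (j : ℤ)) (fun _ => σstar) c := by
  have hm' : (1 : ℝ) ≤ m := by exact_mod_cast hm
  have hj' : 2 * (m : ℝ) ≤ j := by exact_mod_cast hj
  have hj2 : (2 : ℝ) ≤ j := by linarith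
  have hm0 : (0 : ℝ) < m := by linarith
  have hj0 : (0 : ℝ) < j := by linarith
  set α := alphaMG N m ((j : ℤ) ^ 2) (j : ℤ) with hαdef
  set J : ℝ := (j : ℝ) with hJ
  set M : ℝ := (m : ℝ) with hM
  have hα : ∀ p : ℕ, α p = 2 * (N ^ 4 * (M * p) ^ 2 * ((J ^ 2) ^ 2 + J ^ 2 + (M * p) ^ 2) + J ^ 4)
      / (M * N ^ 2 * J ^ 2 * ((J ^ 2) ^ 2 + J ^ 2)) := by
    intro p
    simp [hαdef, alphaMG, hJ, hM]
  have hpos : ∀ p, 1 ≤ p → 0 < α p := by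
    intro p hp
    rw [hα]
    positivity
  have h12 : α 1 ≤ α 2 := by
    rw [hα, hα]
    push_cast
    gcongr <;> norm_num
  have hup : α 2 ≤ (12 * N ^ 4 * M ^ 2 + 2) / (M * N ^ 2 * (J ^ 2 + 1)) := by
    rw [hα, div_le_div_iff₀ (by positivity) (by positivity)]
    have h1 : (J ^ 2) ^ 2 + J ^ 2 + (M * (2 : ℕ)) ^ 2 ≤ 3 / 2 * J ^ 4 := by
      push_cast
      have : (M * 2) ^ 2 ≤ J ^ 2 := by gcongr; linarith
      have h4 : 4 ≤ J ^ 2 := by nlinarith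
      nlinarith
    have h2 : 2 * (N ^ 4 * (M * (2 : ℕ)) ^ 2 * ((J ^ 2) ^ 2 + J ^ 2 + (M * (2 : ℕ)) ^ 2) + J ^ 4)
        ≤ 2 * (N ^ 4 * (M * (2 : ℕ)) ^ 2 * (3 / 2 * J ^ 4) + J ^ 4) := by gcongr
    calc _ ≤ 2 * (N ^ 4 * (M * (2 : ℕ)) ^ 2 * (3 / 2 * J ^ 4) + J ^ 4)
          * (M * N ^ 2 * (J ^ 2 + 1)) := by gcongr
      _ = _ := by push_cast; ring
  obtain ⟨s, hs, c, hc⟩ := mg_abstract α hpos h12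
    (2 * (N ^ 4 * M ^ 2) / (M * N ^ 2 * J ^ 2)) (by positivity) (fun p hp => by
      have hp' : (1 : ℝ) ≤ p := by exact_mod_cast hp
      have hpp : (p : ℝ) ≤ (p : ℝ) ^ 2 := by nlinarith
      rw [hα, div_mul_eq_mul_div, div_le_div_iff₀ (by positivity) (by positivity)]
      calc 2 * (N ^ 4 * M ^ 2) * p * (M * N ^ 2 * J ^ 2 * ((J ^ 2) ^ 2 + J ^ 2))
          ≤ 2 * (N ^ 4 * M ^ 2) * (p : ℝ) ^ 2 * (M * N ^ 2 * J ^ 2 * ((J ^ 2) ^ 2 + J ^ 2)) := by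
            gcongr
        _ = 2 * (N ^ 4 * (M * p) ^ 2 * ((J ^ 2) ^ 2 + J ^ 2 + 0) + 0) * (M * N ^ 2 * J ^ 2) := by
            ring
        _ ≤ _ := by gcongr <;> positivity)
  have h2 := hpos 2 (by norm_num)
  refine ⟨s, lt_of_lt_of_le (by positivity) hs, le_trans ?_ hs, c, hc⟩
  calc J * M * N ^ 2 / (24 * N ^ 4 * M ^ 2 + 2)
      ≤ M * N ^ 2 * (J ^ 2 + 1) / (12 * N ^ 4 * M ^ 2 + 2) := by
        have h3 : J * M * N ^ 2 ≤ M * N ^ 2 * (J ^ 2 + 1) := by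
          have : J ≤ J ^ 2 + 1 := by nlinarith
          calc J * M * N ^ 2 = M * N ^ 2 * J := by ring
            _ ≤ _ := by gcongr
        gcongr
        norm_num
    _ = 1 / ((12 * N ^ 4 * M ^ 2 + 2) / (M * N ^ 2 * (J ^ 2 + 1))) := by rw [one_div_div]
    _ ≤ 1 / α 2 := one_div_le_one_div_of_le h2 hup
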